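/- Fix d > 2 and c₀ > 0. There exists a constant C > 0, depending only on d and c₀, with the following property. Let V be a countable set with symmetric conductances c : V × V → [0,∞) (c(x,y) = c(y,x), c(x,x) = 0) such that π(x) := ∑_y c(x,y) satisfies 0 < π(x) < ∞ for every x, and the graph with an edge between x and y whenever c(x,y) > 0 is connected; let p(x,y) := c(x,y)/π(x) be the associated reversible random walk, p_n its n-step kernels, G(u,v) := ∑_{n=0}^{∞} p_n(u,v) its Green's function, and dist the graph distance. Define the expansion profile Φ(u) := inf{ (∑_{s ∈ S, a ∉ S} c(s,a)) / π(S) : S ⊆ V finite, 0 < π(S) ≤ u } (with inf ∅ = ∞), where π(S) = ∑_{s∈S} π(s). If Φ(u) ≥ c₀·u^{−1/d} for all u > 0, then for all vertices u ≠ v: G(u,v)/π(v) ≤ C·(dist(u,v))^{−(d−2)/2}. -/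

import Mathlib

open scoped ENNReal

/-- The `n`-step kernels of a transition kernel `p` on a countable state space:
`p₀(x,y) = δ_{x=y}` and `p_{n+1}(x,y) = ∑_z p(x,z) pₙ(z,y)`. -/
noncomputable def kernelIter {V : Type*} [DecidableEq V] (p : V → V → ℝ) :
    ℕ → V → V → ℝ
  | 0 => fun x y => if x = y then 1 else 0
  | n + 1 => fun x y => ∑' z, p x z * kernelIter p n z y

namespace ReversibleNetwork

open MeasureTheory Set

/-- Total conductance at a vertex, i.e. the stationary measure of the network. -/
noncomputable def mass {V : Type*} (w : V → V → ℝ≥0∞) (x : V) : ℝ≥0∞ := ∑' y, w x y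

/-- Dirichlet energy of a real function, each edge counted in both directions. -/
noncomputable def energy {V : Type*} (w : V → V → ℝ≥0∞) (f : V → ℝ) : ℝ≥0∞ :=
  ∑' x, ∑' y, w x y * ENNReal.ofReal ((f x - f y) ^ 2)

theorem mul_tsum_mass_le_of_level_sets {V : Type*} [Countable V] (w : V → V → ℝ≥0∞)
    (F : V → ℝ) (φ : ℝ≥0∞)
    (h : ∀ s : ℝ, φ * ∑' x, (Ico 0 (F x)).indicator (fun _ => mass w x) s ≤
      ∑' x, ∑' y, (Ico (F y) (F x)).indicator (fun _ => w x y) s) :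
    φ * ∑' x, mass w x * ENNReal.ofReal (F x) ≤
      ∑' x, ∑' y, w x y * ENNReal.ofReal (F x - F y) := by
  have hm : ∀ (a b : ℝ) (r : ℝ≥0∞), Measurable ((Ico a b).indicator (fun _ : ℝ => r)) :=
    fun a b r => measurable_const.indicator measurableSet_Ico
  have hint := lintegral_mono (μ := volume) h
  rw [lintegral_const_mul _ (Measurable.tsum fun x => hm _ _ _),
    lintegral_tsum fun x => (hm _ _ _).aemeasurable,
    lintegral_tsum fun x => (Measurable.tsum fun y => hm _ _ _).aemeasurable] at hint
  simp_rw [lintegral_tsum fun y => (hm _ _ _).aemeasurable,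
    lintegral_indicator_const measurableSet_Ico, Real.volume_Ico, sub_zero] at hint
  exact hint

theorem tsum_mass_mul {V : Type*} (w : V → V → ℝ≥0∞) (f : V → ℝ≥0∞) :
    ∑' x, ∑' y, w x y * f x = ∑' x, mass w x * f x := by
  simp_rw [ENNReal.tsum_mul_right, mass]

theorem tsum_mass_mul_right {V : Type*} (w : V → V → ℝ≥0∞) (hsymm : ∀ x y, w x y = w y x)
    (f : V → ℝ≥0∞) : ∑' x, ∑' y, w x y * f y = ∑' x, mass w x * f x := by
  rw [ENNReal.tsum_comm, ← tsum_mass_mul]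
  simp_rw [fun x y => hsymm x y]

/-- Cheeger's inequality with Dirichlet boundary conditions. -/
theorem cheeger {V : Type*} [Countable V] [DecidableEq V] (w : V → V → ℝ≥0∞)
    (g : V → ℝ) (hg : ∀ x, 0 ≤ g x) (hfin : {x | 0 < g x}.Finite)
    (hmass : ∀ x, mass w x ≠ ∞) {φ : ℝ} (hφ : 0 < φ)
    (hiso : ∀ S : Finset V, (∀ x ∈ S, 0 < g x) →
      ENNReal.ofReal φ * ∑ x ∈ S, mass w x ≤ ∑ x ∈ S, ∑' y, if y ∈ S then 0 else w x y) :
    ENNReal.ofReal (φ ^ 2 / 4) * ∑' x, mass w x * ENNReal.ofReal (g x ^ 2) ≤ energy w g := by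
  have hcoarea := mul_tsum_mass_le_of_level_sets w (fun x => g x ^ 2) (ENNReal.ofReal φ) (by
    intro s
    by_cases hs : 0 ≤ s
    · have hSfin : {x | s < g x ^ 2}.Finite := hfin.subset fun x hx => by
        rcases (hg x).lt_or_eq with h | h
        · exact h
        · simp only [mem_ofPred_eq, ← h] at hx
          nlinarith
      have hS := hiso hSfin.toFinset fun x hx => by
        rw [Set.Finite.mem_toFinset, mem_ofPred_eq] at hx
        rcases (hg x).lt_or_eq with h | h
        · exact h
        · rw [← h] at hx
          nlinarith
      refine le_trans (le_of_eq ?_) (hS.trans (le_of_eq ?_))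
      · congr 1
        rw [tsum_eq_sum (s := hSfin.toFinset)]
        · refine Finset.sum_congr rfl fun x hx => ?_
          rw [Set.Finite.mem_toFinset, mem_ofPred_eq] at hx
          exact indicator_of_mem (show s ∈ Ico 0 (g x ^ 2) from ⟨hs, hx⟩) _
        · intro x hx
          rw [Set.Finite.mem_toFinset, mem_ofPred_eq] at hx
          exact indicator_of_notMem (fun h => hx h.2) _
      · rw [tsum_eq_sum (s := hSfin.toFinset)]
        · refine Finset.sum_congr rfl fun x hx => tsum_congr fun y => ?_
          rw [Set.Finite.mem_toFinset, mem_ofPred_eq] at hx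
          simp only [Set.Finite.mem_toFinset, mem_ofPred_eq, indicator, mem_Ico]
          grind
        · intro x hx
          rw [Set.Finite.mem_toFinset, mem_ofPred_eq] at hx
          simp only [ENNReal.tsum_eq_zero]
          intro y
          exact indicator_of_notMem (fun h => hx h.2) _
    · have : ∀ x, (Ico 0 (g x ^ 2)).indicator (fun _ => mass w x) s = 0 := fun x =>
        indicator_of_notMem (fun h => hs h.1) _
      simp [this])
  set A := ∑' x, mass w x * ENNReal.ofReal (g x ^ 2) with hA
  have hAtop : A ≠ ∞ := by
    rw [hA, tsum_eq_sum (s := hfin.toFinset)]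
    · exact ENNReal.sum_ne_top.2 fun x _ => ENNReal.mul_ne_top (hmass x) ENNReal.ofReal_ne_top
    · intro x hx
      rw [Set.Finite.mem_toFinset, mem_ofPred_eq] at hx
      have : g x = 0 := le_antisymm (not_lt.1 hx) (hg x)
      simp [this]
  have hpt : ∑' x, ∑' y, w x y * ENNReal.ofReal (g x ^ 2 - g y ^ 2) ≤
      ENNReal.ofReal (2 / φ) * energy w g + ENNReal.ofReal (φ / 2) * A := by
    rw [energy, hA, ← tsum_mass_mul]
    simp_rw [← ENNReal.tsum_mul_left, ← ENNReal.tsum_add]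
    refine ENNReal.tsum_le_tsum fun x => ENNReal.tsum_le_tsum fun y => ?_
    have : ENNReal.ofReal (g x ^ 2 - g y ^ 2) ≤
        ENNReal.ofReal (2 / φ) * ENNReal.ofReal ((g x - g y) ^ 2) +
        ENNReal.ofReal (φ / 2) * ENNReal.ofReal (g x ^ 2) := by
      rw [← ENNReal.ofReal_mul (by positivity), ← ENNReal.ofReal_mul (by positivity),
        ← ENNReal.ofReal_add (by positivity) (by positivity)]
      apply ENNReal.ofReal_le_ofReal
      have h1 : g x ^ 2 - g y ^ 2 ≤ 2 * ((g x - g y) * g x) := by nlinarith [sq_nonneg (g x - g y)]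
      have h2 : 2 / φ * (g x - g y) ^ 2 + φ / 2 * g x ^ 2 - 2 * ((g x - g y) * g x) =
          2 / φ * ((g x - g y) - φ / 2 * g x) ^ 2 := by
        field_simp
        ring
      have h3 : 0 ≤ 2 / φ * ((g x - g y) - φ / 2 * g x) ^ 2 := by positivity
      linarith
    calc _ ≤ w x y * _ := mul_le_mul_right this _
      _ = _ := by ring
  have hsplit : ENNReal.ofReal φ * A = ENNReal.ofReal (φ / 2) * A + ENNReal.ofReal (φ / 2) * A := by
    rw [← add_mul, ← ENNReal.ofReal_add (by positivity) (by positivity), add_halves]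
  have hmain : ENNReal.ofReal (φ / 2) * A ≤ ENNReal.ofReal (2 / φ) * energy w g := by
    have := hcoarea.trans hpt
    rw [hsplit] at this
    exact (ENNReal.add_le_add_iff_right (ENNReal.mul_ne_top ENNReal.ofReal_ne_top hAtop)).1 this
  calc ENNReal.ofReal (φ ^ 2 / 4) * A = ENNReal.ofReal (φ / 2) * (ENNReal.ofReal (φ / 2) * A) := by
        rw [← mul_assoc, ← ENNReal.ofReal_mul (by positivity)]
        congr 2
        ring
    _ ≤ ENNReal.ofReal (φ / 2) * (ENNReal.ofReal (2 / φ) * energy w g) := by gcongr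
    _ = energy w g := by
        rw [← mul_assoc, ← ENNReal.ofReal_mul (by positivity)]
        rw [show φ / 2 * (2 / φ) = 1 by field_simp]
        simp

/-- Nash-type inequality. -/
theorem nash {V : Type*} [Countable V] [DecidableEq V] (w : V → V → ℝ≥0∞)
    (hmass : ∀ x, mass w x ≠ ∞) {c₀ d : ℝ} (hc₀ : 0 < c₀) {ε : ℝ≥0∞} (hε : ε ≠ 0)
    (hlow : ∀ x, ε ≤ mass w x)
    (hiso : ∀ u : ℝ, 0 < u → ∀ S : Finset V, ∑ x ∈ S, mass w x ≤ ENNReal.ofReal u →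
      ENNReal.ofReal (c₀ * u ^ (-(1 / d))) * ∑ x ∈ S, mass w x ≤
        ∑ x ∈ S, ∑' y, if y ∈ S then 0 else w x y)
    (f : V → ℝ) (hf : ∀ x, 0 ≤ f x) (hf1 : ∑' x, mass w x * ENNReal.ofReal (f x) ≤ 1)
    {a : ℝ} (ha : 0 < a) (hfa : ∑' x, mass w x * ENNReal.ofReal (f x ^ 2) = ENNReal.ofReal a) :
    ENNReal.ofReal (c₀ ^ 2 / 8 * (4 / a) ^ (-(2 / d)) * a) ≤ energy w f := by
  set t := a / 4 with ht
  have ht0 : 0 < t := by positivity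
  set g : V → ℝ := fun x => max (f x - t) 0 with hg
  have hgf : ∀ x, 0 < g x → t < f x := fun x hx => by
    by_contra h
    rw [hg] at hx
    simp only [max_eq_right (sub_nonpos.2 (not_lt.1 h)), lt_irrefl] at hx
  have hfin : {x | 0 < g x}.Finite := by
    refine (ENNReal.finite_const_le_of_tsum_ne_top (ne_top_of_le_ne_top ENNReal.one_ne_top hf1)
      (ε := ε * ENNReal.ofReal t) (mul_ne_zero hε (by simpa using ht0))).subset fun x hx => ?_
    exact mul_le_mul' (hlow x) (ENNReal.ofReal_le_ofReal (hgf x hx).le)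
  have hch := cheeger w g (fun x => le_max_right _ _) hfin hmass
    (φ := c₀ * (4 / a) ^ (-(1 / d))) (by positivity) (fun S hS => by
      refine hiso (4 / a) (by positivity) S ?_
      have h1 : ENNReal.ofReal t * ∑ x ∈ S, mass w x ≤ 1 := by
        refine le_trans ?_ ((ENNReal.sum_le_tsum S).trans hf1)
        rw [Finset.mul_sum]
        refine Finset.sum_le_sum fun x hx => ?_
        rw [mul_comm]
        gcongr
        exact (hgf x (hS x hx)).le
      rw [show 4 / a = t⁻¹ by rw [ht, inv_div], ENNReal.ofReal_inv_of_pos ht0]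
      rw [mul_comm] at h1
      exact ENNReal.le_inv_iff_mul_le.2 h1)
  have hge : energy w g ≤ energy w f := by
    refine ENNReal.tsum_le_tsum fun x => ENNReal.tsum_le_tsum fun y => ?_
    refine mul_le_mul_right (ENNReal.ofReal_le_ofReal ?_) _
    refine sq_le_sq.2 ?_
    refine (abs_max_sub_max_le_abs _ _ _).trans (le_of_eq ?_)
    congr 1
    ring
  have hhalf : ENNReal.ofReal (a / 2) ≤ ∑' x, mass w x * ENNReal.ofReal (g x ^ 2) := by
    have h1 : ENNReal.ofReal a ≤ ∑' x, mass w x * ENNReal.ofReal (g x ^ 2) +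
        ENNReal.ofReal (a / 2) := by
      calc ENNReal.ofReal a = ∑' x, mass w x * ENNReal.ofReal (f x ^ 2) := hfa.symm
        _ ≤ ∑' x, (mass w x * ENNReal.ofReal (g x ^ 2) +
            ENNReal.ofReal (a / 2) * (mass w x * ENNReal.ofReal (f x))) := by
          refine ENNReal.tsum_le_tsum fun x => ?_
          have : ENNReal.ofReal (f x ^ 2) ≤ ENNReal.ofReal (g x ^ 2) +
              ENNReal.ofReal (a / 2) * ENNReal.ofReal (f x) := by
            rw [← ENNReal.ofReal_mul (by positivity),
              ← ENNReal.ofReal_add (by positivity) (mul_nonneg (by positivity) (hf x))]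
            apply ENNReal.ofReal_le_ofReal
            rw [show a / 2 = 2 * t by rw [ht]; ring]
            rcases le_total (f x) t with h | h
            · have := hf x
              nlinarith [sq_nonneg (g x)]
            · have : g x = f x - t := max_eq_left (sub_nonneg.2 h)
              rw [this]
              nlinarith
          calc _ ≤ mass w x * _ := mul_le_mul_right this _
            _ = _ := by ring
        _ = _ := ENNReal.tsum_add
        _ ≤ _ := by
          gcongr
          rw [ENNReal.tsum_mul_left]
          exact mul_le_of_le_one_right' hf1
    have h2 : ENNReal.ofReal a = ENNReal.ofReal (a / 2) + ENNReal.ofReal (a / 2) := by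
      rw [← ENNReal.ofReal_add (by positivity) (by positivity), add_halves]
    rw [h2] at h1
    exact (ENNReal.add_le_add_iff_right ENNReal.ofReal_ne_top).1 h1
  refine le_trans ?_ (hch.trans hge)
  refine le_trans (le_of_eq ?_) (mul_le_mul_right hhalf _)
  rw [← ENNReal.ofReal_mul (by positivity)]
  congr 1
  have : ((4 / a) ^ (-(1 / d))) ^ 2 = (4 / a) ^ (-(2 / d)) := by
    rw [← Real.rpow_natCast, ← Real.rpow_mul (by positivity)]
    congr 1
    push_cast
    ring
  rw [mul_pow, this]
  ring

/-- One step of the lazy walk, acting on functions. -/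
noncomputable def lazyStep {V : Type*} (w : V → V → ℝ≥0∞) (f : V → ℝ≥0∞) (x : V) : ℝ≥0∞ :=
  (mass w x)⁻¹ * ∑' y, w x y * (2⁻¹ * (f x + f y))

/-- The heat kernel of the lazy walk with pole `v`, normalised by the stationary measure. -/
noncomputable def lazyHeat {V : Type*} [DecidableEq V] (w : V → V → ℝ≥0∞) (v : V) :
    ℕ → V → ℝ≥0∞
  | 0 => fun x => if x = v then (mass w v)⁻¹ else 0
  | n + 1 => lazyStep w (lazyHeat w v n)

theorem mass_mul_lazyStep {V : Type*} (w : V → V → ℝ≥0∞) (hpos : ∀ x, mass w x ≠ 0)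
    (hmass : ∀ x, mass w x ≠ ∞) (f : V → ℝ≥0∞) (x : V) :
    mass w x * lazyStep w f x = ∑' y, w x y * (2⁻¹ * (f x + f y)) := by
  rw [lazyStep, ← mul_assoc, ENNReal.mul_inv_cancel (hpos x) (hmass x), one_mul]

theorem tsum_lazyStep_mul {V : Type*} (w : V → V → ℝ≥0∞) (hsymm : ∀ x y, w x y = w y x)
    (hpos : ∀ x, mass w x ≠ 0) (hmass : ∀ x, mass w x ≠ ∞) (f g : V → ℝ≥0∞) :
    ∑' x, mass w x * (lazyStep w f x * g x) = ∑' x, mass w x * (f x * lazyStep w g x) := by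
  have hl : ∀ x, mass w x * (lazyStep w f x * g x) =
      ∑' y, (w x y * (2⁻¹ * (f x * g x)) + w x y * (2⁻¹ * (f y * g x))) := fun x => by
    rw [← mul_assoc, mass_mul_lazyStep w hpos hmass, ← ENNReal.tsum_mul_right]
    exact tsum_congr fun y => by ring
  have hr : ∀ x, mass w x * (f x * lazyStep w g x) =
      ∑' y, (w x y * (2⁻¹ * (f x * g x)) + w x y * (2⁻¹ * (f x * g y))) := fun x => by
    rw [mul_left_comm, mass_mul_lazyStep w hpos hmass, ← ENNReal.tsum_mul_left]
    exact tsum_congr fun y => by ring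
  simp_rw [hl, hr, ENNReal.tsum_add]
  congr 1
  rw [ENNReal.tsum_comm]
  simp_rw [fun x y => hsymm x y]

theorem lazyStep_one {V : Type*} (w : V → V → ℝ≥0∞) (hpos : ∀ x, mass w x ≠ 0)
    (hmass : ∀ x, mass w x ≠ ∞) (x : V) : lazyStep w (fun _ => 1) x = 1 := by
  rw [lazyStep, one_add_one_eq_two, ENNReal.inv_mul_cancel (by simp) (by simp)]
  simp_rw [mul_one]
  exact ENNReal.inv_mul_cancel (hpos x) (hmass x)

theorem tsum_mass_mul_lazyHeat_zero {V : Type*} [DecidableEq V] (w : V → V → ℝ≥0∞)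
    (hpos : ∀ x, mass w x ≠ 0) (hmass : ∀ x, mass w x ≠ ∞) (v : V) (f : V → ℝ≥0∞) :
    ∑' x, mass w x * (lazyHeat w v 0 x * f x) = f v := by
  rw [tsum_eq_single v]
  · simp only [lazyHeat, if_true]
    rw [← mul_assoc, ENNReal.mul_inv_cancel (hpos v) (hmass v), one_mul]
  · intro x hx
    simp [lazyHeat, hx]

theorem tsum_lazyHeat_mul_lazyHeat {V : Type*} [DecidableEq V] (w : V → V → ℝ≥0∞)
    (hsymm : ∀ x y, w x y = w y x) (hpos : ∀ x, mass w x ≠ 0) (hmass : ∀ x, mass w x ≠ ∞)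
    (u v : V) (i j : ℕ) :
    ∑' x, mass w x * (lazyHeat w u i x * lazyHeat w v j x) = lazyHeat w v (i + j) u := by
  induction i generalizing j with
  | zero => rw [tsum_mass_mul_lazyHeat_zero w hpos hmass, zero_add]
  | succ i ih =>
    rw [show i + 1 + j = i + (j + 1) by ring, ← ih (j + 1)]
    exact tsum_lazyStep_mul w hsymm hpos hmass _ _

theorem tsum_mass_mul_lazyHeat {V : Type*} [DecidableEq V] (w : V → V → ℝ≥0∞)
    (hsymm : ∀ x y, w x y = w y x) (hpos : ∀ x, mass w x ≠ 0) (hmass : ∀ x, mass w x ≠ ∞)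
    (v : V) (n : ℕ) : ∑' x, mass w x * lazyHeat w v n x = 1 := by
  induction n with
  | zero => simpa using tsum_mass_mul_lazyHeat_zero w hpos hmass v (fun _ => 1)
  | succ n ih =>
    have := tsum_lazyStep_mul w hsymm hpos hmass (lazyHeat w v n) (fun _ => 1)
    simp_rw [lazyStep_one w hpos hmass, mul_one] at this
    exact this.trans ih

theorem lazyHeat_ne_top {V : Type*} [DecidableEq V] (w : V → V → ℝ≥0∞)
    (hsymm : ∀ x y, w x y = w y x) (hpos : ∀ x, mass w x ≠ 0) (hmass : ∀ x, mass w x ≠ ∞)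
    (v : V) (n : ℕ) (x : V) : lazyHeat w v n x ≠ ∞ := by
  intro h
  have h1 : mass w x * lazyHeat w v n x ≤ 1 :=
    (ENNReal.le_tsum x).trans (tsum_mass_mul_lazyHeat w hsymm hpos hmass v n).le
  rw [h, ENNReal.mul_top (hpos x)] at h1
  simp at h1

theorem ennreal_two_mul_le_add_sq (a b : ℝ≥0∞) : 2 * a * b ≤ a ^ 2 + b ^ 2 := by
  by_cases ha : a = ∞
  · simp [ha]
  by_cases hb : b = ∞
  · simp [hb]
  lift a to NNReal using ha
  lift b to NNReal using hb
  exact_mod_cast two_mul_le_add_sq a b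

/-- Jensen's inequality for the square function and a finite discrete measure. -/
theorem sq_average_le {ι : Type*} (p b : ι → ℝ≥0∞) (hp0 : ∑' i, p i ≠ 0)
    (hp : ∑' i, p i ≠ ∞) (hpb : (∑' i, p i)⁻¹ * ∑' i, p i * b i ≠ ∞) :
    (∑' i, p i) * ((∑' i, p i)⁻¹ * ∑' i, p i * b i) ^ 2 ≤ ∑' i, p i * b i ^ 2 := by
  set M := ∑' i, p i with hM
  set μ := M⁻¹ * ∑' i, p i * b i with hμ
  have hMμ : ∑' i, p i * b i = M * μ := by
    rw [hμ, ← mul_assoc, ENNReal.mul_inv_cancel hp0 hp, one_mul]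
  have h1 : M * μ ^ 2 + M * μ ^ 2 ≤ M * μ ^ 2 + ∑' i, p i * b i ^ 2 := by
    calc M * μ ^ 2 + M * μ ^ 2 = 2 * μ * (M * μ) := by ring
      _ = ∑' i, 2 * μ * (p i * b i) := by rw [← hMμ, ENNReal.tsum_mul_left]
      _ ≤ ∑' i, (p i * μ ^ 2 + p i * b i ^ 2) := by
        refine ENNReal.tsum_le_tsum fun i => ?_
        calc 2 * μ * (p i * b i) = p i * (2 * μ * b i) := by ring
          _ ≤ p i * (μ ^ 2 + b i ^ 2) := mul_le_mul_right (ennreal_two_mul_le_add_sq _ _) _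
          _ = _ := by ring
      _ = _ := by rw [ENNReal.tsum_add, ENNReal.tsum_mul_right]
  exact (ENNReal.add_le_add_iff_left
    (ENNReal.mul_ne_top hp (ENNReal.pow_ne_top hpb))).1 h1

theorem sq_midpoint_add (a b : ℝ≥0∞) (ha : a ≠ ∞) (hb : b ≠ ∞) :
    (2⁻¹ * (a + b)) ^ 2 + ENNReal.ofReal (1 / 4) * ENNReal.ofReal ((a.toReal - b.toReal) ^ 2) =
      2⁻¹ * (a ^ 2 + b ^ 2) := by
  obtain ⟨r, hr, rfl⟩ : ∃ r : ℝ, 0 ≤ r ∧ a = ENNReal.ofReal r :=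
    ⟨a.toReal, ENNReal.toReal_nonneg, (ENNReal.ofReal_toReal ha).symm⟩
  obtain ⟨s, hs, rfl⟩ : ∃ r : ℝ, 0 ≤ r ∧ b = ENNReal.ofReal r :=
    ⟨b.toReal, ENNReal.toReal_nonneg, (ENNReal.ofReal_toReal hb).symm⟩
  have h2 : (2⁻¹ : ℝ≥0∞) = ENNReal.ofReal (1 / 2) := by
    rw [one_div, ENNReal.ofReal_inv_of_pos two_pos]
    simp
  rw [h2, ENNReal.toReal_ofReal hr, ENNReal.toReal_ofReal hs, ← ENNReal.ofReal_add hr hs,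
    ← ENNReal.ofReal_mul (by norm_num), ← ENNReal.ofReal_pow (by positivity),
    ← ENNReal.ofReal_mul (by norm_num), ← ENNReal.ofReal_add (by positivity) (by positivity),
    ← ENNReal.ofReal_pow hr, ← ENNReal.ofReal_pow hs,
    ← ENNReal.ofReal_add (by positivity) (by positivity), ← ENNReal.ofReal_mul (by norm_num)]
  congr 1
  ring

theorem tsum_sq_lazyStep_add_energy_le {V : Type*} (w : V → V → ℝ≥0∞)
    (hsymm : ∀ x y, w x y = w y x) (hpos : ∀ x, mass w x ≠ 0) (hmass : ∀ x, mass w x ≠ ∞)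
    (f : V → ℝ≥0∞) (hf : ∀ x, f x ≠ ∞) (hf' : ∀ x, lazyStep w f x ≠ ∞) :
    ∑' x, mass w x * lazyStep w f x ^ 2 +
      ENNReal.ofReal (1 / 4) * energy w (fun x => (f x).toReal) ≤ ∑' x, mass w x * f x ^ 2 := by
  have h1 : ∑' x, mass w x * lazyStep w f x ^ 2 ≤
      ∑' x, ∑' y, w x y * (2⁻¹ * (f x + f y)) ^ 2 :=
    ENNReal.tsum_le_tsum fun x =>
      sq_average_le (w x) (fun y => 2⁻¹ * (f x + f y)) (hpos x) (hmass x) (hf' x)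
  refine (add_le_add_left h1 _).trans (le_of_eq ?_)
  rw [energy]
  simp_rw [← ENNReal.tsum_mul_left, ← ENNReal.tsum_add]
  have h2 : ∀ x y, w x y * (2⁻¹ * (f x + f y)) ^ 2 + ENNReal.ofReal (1 / 4) *
      (w x y * ENNReal.ofReal (((f x).toReal - (f y).toReal) ^ 2)) =
      w x y * (2⁻¹ * f x ^ 2) + w x y * (2⁻¹ * f y ^ 2) := fun x y => by
    rw [mul_left_comm, ← mul_add, sq_midpoint_add _ _ (hf x) (hf y)]
    ring
  simp_rw [h2, ENNReal.tsum_add]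
  rw [tsum_mass_mul w (fun x => 2⁻¹ * f x ^ 2),
    tsum_mass_mul_right w hsymm (fun x => 2⁻¹ * f x ^ 2), ← ENNReal.tsum_add]
  refine tsum_congr fun x => ?_
  rw [← mul_add, ← add_mul, ENNReal.inv_two_add_inv_two, one_mul]

theorem one_add_mul_le_one_sub_rpow_neg {p z : ℝ} (hp : 0 ≤ p) (hz : z < 1) :
    1 + p * z ≤ (1 - z) ^ (-p) := by
  have h1 : (1 - z) ≤ Real.exp (-z) := by linarith [Real.add_one_le_exp (-z)]
  calc 1 + p * z ≤ Real.exp (p * z) := by linarith [Real.add_one_le_exp (p * z)]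
    _ = Real.exp (-z) ^ (-p) := by
      rw [← Real.exp_mul]
      congr 1
      ring
    _ ≤ (1 - z) ^ (-p) := Real.rpow_le_rpow_of_nonpos (by linarith) h1 (by linarith)

/-- Discrete Gronwall-type estimate giving polynomial decay. -/
theorem polynomial_decay {a : ℕ → ℝ} {β κ ρ : ℝ} (hβ : 0 < β) (hρ : 0 < ρ) (hρκ : ρ ≤ β * κ)
    (ha : ∀ n, 0 ≤ a n) (h0 : 0 < a 0 → ρ ≤ a 0 ^ (-β))
    (hstep : ∀ n, 0 < a n → a (n + 1) ≤ a n * (1 - κ * a n ^ β))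
    (hmono : ∀ n, a (n + 1) ≤ a n) (n : ℕ) :
    a n ≤ (ρ * (n + 1)) ^ (-(1 / β)) := by
  have key : ∀ n : ℕ, 0 < a n → ρ * (n + 1) ≤ a n ^ (-β) := by
    intro n
    induction n with
    | zero => simpa using h0
    | succ n ih =>
      intro hn
      have hn' : 0 < a n := hn.trans_le (hmono n)
      have hlt : 0 < 1 - κ * a n ^ β := by
        have := hn.trans_le (hstep n hn')
        exact (pos_iff_pos_of_mul_pos this).1 hn'
      push_cast
      calc ρ * ((n : ℝ) + 1 + 1) ≤ a n ^ (-β) + β * κ := by linarith [ih hn']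
        _ = a n ^ (-β) * (1 + β * (κ * a n ^ β)) := by
          have : a n ^ (-β) * a n ^ β = 1 := by
            rw [← Real.rpow_add hn']
            simp
          linear_combination (-(β * κ)) * this
        _ ≤ a n ^ (-β) * (1 - κ * a n ^ β) ^ (-β) := by
          gcongr
          exact one_add_mul_le_one_sub_rpow_neg hβ.le (by linarith)
        _ = (a n * (1 - κ * a n ^ β)) ^ (-β) := (Real.mul_rpow hn'.le hlt.le).symm
        _ ≤ a (n + 1) ^ (-β) :=
          Real.rpow_le_rpow_of_nonpos hn (hstep n hn') (by linarith)
  rcases (ha n).eq_or_lt with h | h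
  · rw [← h]
    positivity
  · have h1 := Real.rpow_le_rpow_of_nonpos (z := -(1 / β)) (by positivity) (key n h)
      (by simp only [Left.neg_nonpos_iff]; positivity)
    rwa [← Real.rpow_mul h.le, show -β * -(1 / β) = 1 by field_simp, Real.rpow_one] at h1

theorem le_mass_of_isoperimetry {V : Type*} [DecidableEq V] (w : V → V → ℝ≥0∞)
    (hpos : ∀ x, mass w x ≠ 0) (hmass : ∀ x, mass w x ≠ ∞) {c₀ d : ℝ} (hd : 0 < d)
    (hc₀ : 0 < c₀)
    (hiso : ∀ u : ℝ, 0 < u → ∀ S : Finset V, ∑ x ∈ S, mass w x ≤ ENNReal.ofReal u →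
      ENNReal.ofReal (c₀ * u ^ (-(1 / d))) * ∑ x ∈ S, mass w x ≤
        ∑ x ∈ S, ∑' y, if y ∈ S then 0 else w x y)
    (x : V) : ENNReal.ofReal (c₀ ^ d) ≤ mass w x := by
  have hm : 0 < (mass w x).toReal := ENNReal.toReal_pos (hpos x) (hmass x)
  have h := hiso _ hm {x} (by simp [ENNReal.ofReal_toReal (hmass x)])
  simp only [Finset.sum_singleton] at h
  have h2 : ∑' y, (if y ∈ ({x} : Finset V) then 0 else w x y) ≤ mass w x :=
    ENNReal.tsum_le_tsum fun y => by split_ifs <;> simp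
  have h3 : ENNReal.ofReal (c₀ * (mass w x).toReal ^ (-(1 / d))) ≤ 1 := by
    rw [← ENNReal.mul_le_mul_iff_left (hpos x) (hmass x), one_mul]
    exact h.trans h2
  rw [ENNReal.ofReal_le_one, Real.rpow_neg hm.le, ← div_eq_mul_inv,
    div_le_one (by positivity)] at h3
  refine ENNReal.ofReal_le_of_le_toReal ?_
  calc c₀ ^ d ≤ ((mass w x).toReal ^ (1 / d)) ^ d := by gcongr
    _ = _ := by rw [← Real.rpow_mul hm.le, one_div_mul_cancel hd.ne', Real.rpow_one]

/-- The rate constant in the heat kernel bound. -/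
noncomputable def heatRate (d c₀ : ℝ) : ℝ :=
  min (c₀ ^ 2) (2 / d * (c₀ ^ 2 / 32 * 4 ^ (-(2 / d))))

theorem heatRate_pos {d c₀ : ℝ} (hd : 0 < d) (hc₀ : 0 < c₀) : 0 < heatRate d c₀ :=
  lt_min (by positivity) (by positivity)

theorem tsum_sq_lazyHeat_le {V : Type*} [Countable V] [DecidableEq V] (w : V → V → ℝ≥0∞)
    (hsymm : ∀ x y, w x y = w y x) (hpos : ∀ x, mass w x ≠ 0) (hmass : ∀ x, mass w x ≠ ∞)
    {c₀ d : ℝ} (hd : 0 < d) (hc₀ : 0 < c₀)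
    (hiso : ∀ u : ℝ, 0 < u → ∀ S : Finset V, ∑ x ∈ S, mass w x ≤ ENNReal.ofReal u →
      ENNReal.ofReal (c₀ * u ^ (-(1 / d))) * ∑ x ∈ S, mass w x ≤
        ∑ x ∈ S, ∑' y, if y ∈ S then 0 else w x y)
    (v : V) (n : ℕ) :
    ∑' x, mass w x * lazyHeat w v n x ^ 2 ≤
      ENNReal.ofReal ((heatRate d c₀ * (n + 1)) ^ (-(d / 2))) := by
  set A : ℕ → ℝ≥0∞ := fun n => ∑' x, mass w x * lazyHeat w v n x ^ 2 with hA
  have hlow := le_mass_of_isoperimetry w hpos hmass hd hc₀ hiso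
  have htop := lazyHeat_ne_top w hsymm hpos hmass v
  have hA' : ∀ n, A n = lazyHeat w v (n + n) v := fun n => by
    simp_rw [hA, ← tsum_lazyHeat_mul_lazyHeat w hsymm hpos hmass v v n n, sq]
  have hAtop : ∀ n, A n ≠ ∞ := fun n => by
    rw [hA']
    exact htop _ _
  have hdecr : ∀ n, A (n + 1) + ENNReal.ofReal (1 / 4) *
      energy w (fun x => (lazyHeat w v n x).toReal) ≤ A n := fun n =>
    tsum_sq_lazyStep_add_energy_le w hsymm hpos hmass (lazyHeat w v n) (htop n) (htop (n + 1))
  have hstep : ∀ n, 0 < (A n).toReal → (A (n + 1)).toReal ≤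
      (A n).toReal * (1 - c₀ ^ 2 / 32 * 4 ^ (-(2 / d)) * (A n).toReal ^ (2 / d)) := by
    intro n hn
    set a := (A n).toReal with ha
    have hnash := nash w hmass hc₀ (ε := ENNReal.ofReal (c₀ ^ d))
      (by simp only [ne_eq, ENNReal.ofReal_eq_zero, not_le]; positivity) hlow hiso
      (fun x => (lazyHeat w v n x).toReal) (fun x => ENNReal.toReal_nonneg)
      (by
        simp_rw [ENNReal.ofReal_toReal (htop n _)]
        exact (tsum_mass_mul_lazyHeat w hsymm hpos hmass v n).le) hn
      (by
        simp_rw [ENNReal.ofReal_pow ENNReal.toReal_nonneg, ENNReal.ofReal_toReal (htop n _)]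
        exact (ENNReal.ofReal_toReal (hAtop n)).symm)
    have h1 : A (n + 1) + ENNReal.ofReal (1 / 4) *
        ENNReal.ofReal (c₀ ^ 2 / 8 * (4 / a) ^ (-(2 / d)) * a) ≤ A n :=
      (add_le_add_right (mul_le_mul_right hnash _) _).trans (hdecr n)
    rw [← ENNReal.ofReal_toReal (hAtop n), ← ENNReal.ofReal_toReal (hAtop (n + 1)),
      ← ENNReal.ofReal_mul (by norm_num),
      ← ENNReal.ofReal_add ENNReal.toReal_nonneg (by positivity),
      ENNReal.ofReal_le_ofReal_iff ENNReal.toReal_nonneg, ← ha,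
      Real.div_rpow (by norm_num) hn.le, Real.rpow_neg hn.le, div_inv_eq_mul] at h1
    linear_combination h1
  have hdecay := polynomial_decay (a := fun n => (A n).toReal) (β := 2 / d)
    (κ := c₀ ^ 2 / 32 * 4 ^ (-(2 / d))) (by positivity) (heatRate_pos hd hc₀)
    (min_le_right _ _) (fun n => ENNReal.toReal_nonneg)
    (by
      intro h0
      refine (min_le_left _ _).trans ?_
      have h1 : (A 0).toReal ≤ (c₀ ^ d)⁻¹ := by
        refine ENNReal.toReal_le_of_le_ofReal (by positivity) ?_
        rw [hA', ENNReal.ofReal_inv_of_pos (by positivity)]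
        simp only [lazyHeat, if_true]
        exact ENNReal.inv_le_inv.2 (hlow v)
      have h2 := Real.rpow_le_rpow_of_nonpos (z := -(2 / d)) h0 h1
        (by simp only [Left.neg_nonpos_iff]; positivity)
      refine le_trans (le_of_eq ?_) h2
      rw [← Real.rpow_neg hc₀.le, ← Real.rpow_mul hc₀.le,
        show -d * -(2 / d) = 2 by field_simp, Real.rpow_two])
    hstep (fun n => ENNReal.toReal_mono (hAtop n) (le_self_add.trans (hdecr n))) n
  rw [one_div_div] at hdecay
  exact (ENNReal.le_ofReal_iff_toReal_le (hAtop n) (by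
    have := heatRate_pos hd hc₀
    positivity)).2 hdecay

theorem lazyHeat_le {V : Type*} [Countable V] [DecidableEq V] (w : V → V → ℝ≥0∞)
    (hsymm : ∀ x y, w x y = w y x) (hpos : ∀ x, mass w x ≠ 0) (hmass : ∀ x, mass w x ≠ ∞)
    {c₀ d : ℝ} (hd : 0 < d) (hc₀ : 0 < c₀)
    (hiso : ∀ u : ℝ, 0 < u → ∀ S : Finset V, ∑ x ∈ S, mass w x ≤ ENNReal.ofReal u →
      ENNReal.ofReal (c₀ * u ^ (-(1 / d))) * ∑ x ∈ S, mass w x ≤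
        ∑ x ∈ S, ∑' y, if y ∈ S then 0 else w x y)
    (u v : V) (n : ℕ) :
    lazyHeat w v n u ≤ ENNReal.ofReal ((heatRate d c₀ / 2 * (n + 1)) ^ (-(d / 2))) := by
  have hρ := heatRate_pos hd hc₀
  have hbound : ∀ (z : V) (i : ℕ), n ≤ 2 * i + 1 → ∑' x, mass w x * lazyHeat w z i x ^ 2 ≤
      ENNReal.ofReal ((heatRate d c₀ / 2 * (n + 1)) ^ (-(d / 2))) := fun z i hi => by
    refine (tsum_sq_lazyHeat_le w hsymm hpos hmass hd hc₀ hiso z i).trans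
      (ENNReal.ofReal_le_ofReal (Real.rpow_le_rpow_of_nonpos (by positivity) ?_
        (by simp only [Left.neg_nonpos_iff]; positivity)))
    have : (n : ℝ) ≤ 2 * i + 1 := by exact_mod_cast hi
    nlinarith
  have h2 : 2 * lazyHeat w v n u ≤
      2 * ENNReal.ofReal ((heatRate d c₀ / 2 * (n + 1)) ^ (-(d / 2))) := by
    calc 2 * lazyHeat w v n u
        = ∑' x, 2 * (mass w x * (lazyHeat w u (n / 2) x * lazyHeat w v (n - n / 2) x)) := by
          rw [ENNReal.tsum_mul_left, tsum_lazyHeat_mul_lazyHeat w hsymm hpos hmass,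
            Nat.add_sub_cancel' (Nat.div_le_self n 2)]
      _ ≤ ∑' x, (mass w x * lazyHeat w u (n / 2) x ^ 2 +
            mass w x * lazyHeat w v (n - n / 2) x ^ 2) := by
          refine ENNReal.tsum_le_tsum fun x => ?_
          calc _ = mass w x * (2 * lazyHeat w u (n / 2) x * lazyHeat w v (n - n / 2) x) := by ring
            _ ≤ mass w x * (lazyHeat w u (n / 2) x ^ 2 + lazyHeat w v (n - n / 2) x ^ 2) :=
              mul_le_mul_right (ennreal_two_mul_le_add_sq _ _) _
            _ = _ := mul_add _ _ _
      _ ≤ _ := by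
          rw [ENNReal.tsum_add, two_mul]
          exact add_le_add (hbound u _ (by omega)) (hbound v _ (by omega))
  exact (ENNReal.mul_le_mul_iff_right (by simp) (by simp)).1 h2

theorem lazyHeat_eq_zero_of_lt_dist {V : Type*} [DecidableEq V] (w : V → V → ℝ≥0∞)
    (G : SimpleGraph V) (hG : G.Connected) (hadj : ∀ x y, w x y ≠ 0 → G.Adj x y)
    (v : V) (n : ℕ) (u : V) (h : n < G.dist u v) : lazyHeat w v n u = 0 := by
  induction n generalizing u with
  | zero =>
    have : u ≠ v := by
      rintro rfl
      simp at h
    simp [lazyHeat, this]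
  | succ n ih =>
    rw [lazyHeat, lazyStep, ENNReal.tsum_eq_zero.2, mul_zero]
    intro y
    by_cases hy : w u y = 0
    · rw [hy, zero_mul]
    · have h1 : G.dist u v ≤ G.dist u y + G.dist y v := hG.dist_triangle
      rw [SimpleGraph.dist_eq_one_iff_adj.2 (hadj u y hy)] at h1
      rw [ih u (by omega), ih y (by omega)]
      simp

theorem sum_range_rpow_le {s : ℝ} (hs : 1 < s) {D : ℕ} (hD : 1 ≤ D) (N : ℕ) :
    ∑ n ∈ Finset.range N, ((D : ℝ) + n + 1) ^ (-s) ≤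
      ((D : ℝ) ^ (1 - s) - ((D : ℝ) + N) ^ (1 - s)) / (s - 1) := by
  induction N with
  | zero => simp
  | succ N ih =>
    rw [Finset.sum_range_succ]
    have hD' : (1 : ℝ) ≤ D := by exact_mod_cast hD
    set m : ℝ := (D : ℝ) + N + 1 with hm
    have hm1 : 1 < m := by
      have : (0 : ℝ) ≤ N := N.cast_nonneg
      linarith
    have hm0 : 0 < m := by linarith
    have hs' : 0 < s - 1 := by linarith
    have h1 := one_add_mul_le_one_sub_rpow_neg (p := s - 1) (z := 1 / m) hs'.le
      ((div_lt_one hm0).2 hm1)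
    have h2 : m ^ (-s) ≤ ((m - 1) ^ (1 - s) - m ^ (1 - s)) / (s - 1) := by
      rw [le_div_iff₀ hs']
      have h3 : m ^ (-s) = m ^ (1 - s) / m := by
        rw [show -s = 1 - s - 1 by ring, Real.rpow_sub_one hm0.ne']
      have h4 : (m - 1) ^ (1 - s) = m ^ (1 - s) * (1 - 1 / m) ^ (-(s - 1)) := by
        rw [show -(s - 1) = 1 - s by ring,
          ← Real.mul_rpow hm0.le (sub_nonneg.2 ((div_le_one hm0).2 hm1.le))]
        congr 1
        field_simp
      rw [h3, h4]
      have h5 := mul_le_mul_of_nonneg_left h1 (Real.rpow_nonneg hm0.le (1 - s))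
      linear_combination h5
    have h6 : (D : ℝ) + N = m - 1 := by rw [hm]; ring
    have h7 : (D : ℝ) + ((N + 1 : ℕ) : ℝ) = m := by rw [hm]; push_cast; ring
    rw [h6] at ih
    rw [h7]
    linear_combination ih + h2

theorem tsum_ofReal_rpow_le {s ρ : ℝ} (hs : 1 < s) (hρ : 0 < ρ) {D : ℕ} (hD : 1 ≤ D) :
    ∑' n : ℕ, ENNReal.ofReal ((ρ * ((n + D : ℕ) + 1)) ^ (-s)) ≤
      ENNReal.ofReal (ρ ^ (-s) / (s - 1) * (D : ℝ) ^ (1 - s)) := by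
  have hs' : 0 < s - 1 := by linarith
  refine ENNReal.tsum_le_of_sum_range_le fun N => ?_
  rw [← ENNReal.ofReal_sum_of_nonneg fun n _ => by positivity]
  apply ENNReal.ofReal_le_ofReal
  calc ∑ n ∈ Finset.range N, (ρ * (((n + D : ℕ) : ℝ) + 1)) ^ (-s)
      = ρ ^ (-s) * ∑ n ∈ Finset.range N, ((D : ℝ) + n + 1) ^ (-s) := by
        rw [Finset.mul_sum]
        refine Finset.sum_congr rfl fun n _ => ?_
        rw [Real.mul_rpow hρ.le (by positivity)]
        push_cast
        ring_nf
    _ ≤ ρ ^ (-s) * (((D : ℝ) ^ (1 - s) - ((D : ℝ) + N) ^ (1 - s)) / (s - 1)) := by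
        gcongr
        exact sum_range_rpow_le hs hD N
    _ ≤ ρ ^ (-s) * ((D : ℝ) ^ (1 - s) / (s - 1)) := by
        gcongr
        have : 0 ≤ ((D : ℝ) + N) ^ (1 - s) := by positivity
        linarith
    _ = _ := by ring

theorem tsum_lazyHeat_le {V : Type*} [Countable V] [DecidableEq V] (w : V → V → ℝ≥0∞)
    (hsymm : ∀ x y, w x y = w y x) (hpos : ∀ x, mass w x ≠ 0) (hmass : ∀ x, mass w x ≠ ∞)
    {c₀ d : ℝ} (hd : 2 < d) (hc₀ : 0 < c₀)
    (hiso : ∀ u : ℝ, 0 < u → ∀ S : Finset V, ∑ x ∈ S, mass w x ≤ ENNReal.ofReal u →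
      ENNReal.ofReal (c₀ * u ^ (-(1 / d))) * ∑ x ∈ S, mass w x ≤
        ∑ x ∈ S, ∑' y, if y ∈ S then 0 else w x y)
    (u v : V) {D : ℕ} (hD : 1 ≤ D) (hzero : ∀ n < D, lazyHeat w v n u = 0) :
    ∑' n, lazyHeat w v n u ≤
      ENNReal.ofReal ((heatRate d c₀ / 2) ^ (-(d / 2)) / (d / 2 - 1) *
        (D : ℝ) ^ (1 - d / 2)) := by
  have hd0 : 0 < d := by linarith
  have hρ := heatRate_pos hd0 hc₀
  rw [← ENNReal.summable.sum_add_tsum_nat_add' (k := D),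
    Finset.sum_eq_zero fun n hn => hzero n (Finset.mem_range.1 hn), zero_add]
  refine le_trans (ENNReal.tsum_le_tsum fun n =>
    lazyHeat_le w hsymm hpos hmass hd0 hc₀ hiso u v (n + D)) ?_
  exact tsum_ofReal_rpow_le (by linarith) (by positivity) hD

theorem tsum_lazyHeat_ne_top {V : Type*} [Countable V] [DecidableEq V] (w : V → V → ℝ≥0∞)
    (hsymm : ∀ x y, w x y = w y x) (hpos : ∀ x, mass w x ≠ 0) (hmass : ∀ x, mass w x ≠ ∞)
    {c₀ d : ℝ} (hd : 2 < d) (hc₀ : 0 < c₀)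
    (hiso : ∀ u : ℝ, 0 < u → ∀ S : Finset V, ∑ x ∈ S, mass w x ≤ ENNReal.ofReal u →
      ENNReal.ofReal (c₀ * u ^ (-(1 / d))) * ∑ x ∈ S, mass w x ≤
        ∑ x ∈ S, ∑' y, if y ∈ S then 0 else w x y)
    (u v : V) : ∑' n, lazyHeat w v n u ≠ ∞ := by
  have hd0 : 0 < d := by linarith
  have hρ := heatRate_pos hd0 hc₀
  rw [← ENNReal.summable.sum_add_tsum_nat_add' (k := 1)]
  refine ENNReal.add_ne_top.2 ⟨ENNReal.sum_ne_top.2 fun n _ =>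
    lazyHeat_ne_top w hsymm hpos hmass v n u, ?_⟩
  exact ne_top_of_le_ne_top ENNReal.ofReal_ne_top ((ENNReal.tsum_le_tsum fun n =>
    lazyHeat_le w hsymm hpos hmass hd0 hc₀ hiso u v (n + 1)).trans
    (tsum_ofReal_rpow_le (s := d / 2) (by linarith) (half_pos hρ) le_rfl))

/-- The heat kernel of the walk with pole `v`, normalised by the stationary measure. -/
noncomputable def heat {V : Type*} [DecidableEq V] (w : V → V → ℝ≥0∞) (v : V) :
    ℕ → V → ℝ≥0∞
  | 0 => fun x => if x = v then (mass w v)⁻¹ else 0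
  | n + 1 => fun x => (mass w x)⁻¹ * ∑' y, w x y * heat w v n y

/-- The Green's function of the walk is dominated by half of that of its lazy version. -/
theorem sum_range_heat_le {V : Type*} [DecidableEq V] (w : V → V → ℝ≥0∞)
    (hpos : ∀ x, mass w x ≠ 0) (hmass : ∀ x, mass w x ≠ ∞) (v : V)
    (hfin : ∀ x, ∑' n, lazyHeat w v n x ≠ ∞) (N : ℕ) (u : V) :
    ∑ n ∈ Finset.range N, heat w v n u ≤ 2⁻¹ * ∑' n, lazyHeat w v n u := by
  set g : V → ℝ≥0∞ := fun x => ∑' n, lazyHeat w v n x with hg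
  have hfix : ∀ x, g x = lazyHeat w v 0 x + lazyStep w g x := fun x => by
    simp only [hg]
    rw [tsum_eq_zero_add' ENNReal.summable]
    congr 1
    simp only [lazyHeat, lazyStep]
    rw [ENNReal.tsum_mul_left, ENNReal.tsum_comm]
    simp_rw [ENNReal.tsum_mul_left, ENNReal.tsum_add]
  have hhalf : ∀ x, 2⁻¹ * g x =
      lazyHeat w v 0 x + (mass w x)⁻¹ * ∑' y, w x y * (2⁻¹ * g y) := fun x => by
    have h1 : lazyStep w g x = 2⁻¹ * g x + (mass w x)⁻¹ * ∑' y, w x y * (2⁻¹ * g y) := by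
      simp_rw [lazyStep, mul_add, ENNReal.tsum_add, ENNReal.tsum_mul_right, mul_add]
      congr 1
      rw [← mul_assoc]
      exact (congrArg (· * (2⁻¹ * g x)) (ENNReal.inv_mul_cancel (hpos x) (hmass x))).trans
        (one_mul _)
    have h2 : 2⁻¹ * g x + 2⁻¹ * g x = 2⁻¹ * g x +
        (lazyHeat w v 0 x + (mass w x)⁻¹ * ∑' y, w x y * (2⁻¹ * g y)) := by
      rw [← add_mul, ENNReal.inv_two_add_inv_two, one_mul, add_left_comm, ← h1, ← hfix]
    exact (ENNReal.add_right_inj (ENNReal.mul_ne_top (by simp) (hfin x))).1 h2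
  induction N generalizing u with
  | zero => simp
  | succ N ih =>
    change _ ≤ 2⁻¹ * g u
    rw [Finset.sum_range_succ', add_comm, hhalf u]
    refine add_le_add le_rfl ?_
    simp only [heat]
    rw [← Finset.mul_sum, ← Summable.tsum_finsetSum fun _ _ => ENNReal.summable]
    simp_rw [← Finset.mul_sum]
    exact mul_le_mul_right (ENNReal.tsum_le_tsum fun y => mul_le_mul_right (ih y) _) _

theorem kernelIter_nonneg {V : Type*} [DecidableEq V] {p : V → V → ℝ} (hp : ∀ x y, 0 ≤ p x y)
    (n : ℕ) (x y : V) : 0 ≤ kernelIter p n x y := by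
  induction n generalizing x with
  | zero =>
    simp only [kernelIter]
    split_ifs <;> norm_num
  | succ n ih => exact tsum_nonneg fun z => mul_nonneg (hp x z) (ih z)

theorem ofReal_tsum_le {ι : Type*} {f : ι → ℝ} (hf : ∀ i, 0 ≤ f i) :
    ENNReal.ofReal (∑' i, f i) ≤ ∑' i, ENNReal.ofReal (f i) := by
  by_cases h : Summable f
  · exact (ENNReal.ofReal_tsum_of_nonneg hf h).le
  · simp [tsum_eq_zero_of_not_summable h]

theorem ofReal_kernelIter_le {V : Type*} [DecidableEq V] (c : V → V → ℝ)
    (hc : ∀ x y, 0 ≤ c x y) (hsum : ∀ x, Summable (c x)) (hpos : ∀ x, 0 < ∑' y, c x y)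
    (n : ℕ) (u v : V) :
    ENNReal.ofReal (kernelIter (fun x y => c x y / ∑' z, c x z) n u v) ≤
      mass (fun x y => ENNReal.ofReal (c x y)) v *
        heat (fun x y => ENNReal.ofReal (c x y)) v n u := by
  have hm : ∀ x, mass (fun x y => ENNReal.ofReal (c x y)) x = ENNReal.ofReal (∑' y, c x y) :=
    fun x => (ENNReal.ofReal_tsum_of_nonneg (hc x) (hsum x)).symm
  induction n generalizing u with
  | zero =>
    simp only [kernelIter, heat]
    split_ifs
    · rw [ENNReal.mul_inv_cancel, ENNReal.ofReal_one]
      · rw [hm]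
        simpa using hpos v
      · rw [hm]
        exact ENNReal.ofReal_ne_top
    · simp
  | succ n ih =>
    have hp : ∀ x y, 0 ≤ c x y / ∑' z, c x z := fun x y => div_nonneg (hc x y) (hpos x).le
    simp only [kernelIter, heat]
    refine (ofReal_tsum_le fun z => mul_nonneg (hp u z) (kernelIter_nonneg hp n z v)).trans ?_
    rw [mul_left_comm, ← ENNReal.tsum_mul_left, ← ENNReal.tsum_mul_left]
    refine ENNReal.tsum_le_tsum fun z => ?_
    rw [ENNReal.ofReal_mul (hp u z), ENNReal.ofReal_div_of_pos (hpos u), hm u, div_eq_mul_inv]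
    calc _ ≤ ENNReal.ofReal (c u z) * (ENNReal.ofReal (∑' y, c u y))⁻¹ * _ :=
          mul_le_mul_right (ih z) _
      _ = _ := by ring

end ReversibleNetwork

/-- For every `d > 2` and `c₀ > 0` there is a constant `C = C(d, c₀) > 0` such that for any
connected reversible network on a countable vertex set with conductances `c`, stationary
measure `π(x) = ∑_y c(x,y) ∈ (0,∞)`, and expansion profile satisfying
`Φ(u) ≥ c₀ u^{−1/d}` for all `u > 0`, the Green's function of the walk `p(x,y) = c(x,y)/π(x)`
satisfies `G(u,v)/π(v) ≤ C · dist(u,v)^{−(d−2)/2}` for all `u ≠ v`. -/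
theorem stmt11 (d c₀ : ℝ) (hd : 2 < d) (hc₀ : 0 < c₀) :
    ∃ C : ℝ, 0 < C ∧
      ∀ (V : Type) [Countable V] [DecidableEq V] (G : SimpleGraph V) (c : V → V → ℝ),
        (∀ x y, 0 ≤ c x y) → (∀ x y, c x y = c y x) → (∀ x, c x x = 0) →
        (∀ x, Summable (fun y => c x y)) → (∀ x, 0 < ∑' y, c x y) →
        (∀ x y, G.Adj x y ↔ 0 < c x y) → G.Connected →
        (∀ u : ℝ, 0 < u →
          ENNReal.ofReal (c₀ * u ^ (-(1 / d))) ≤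
            sInf {t : ℝ≥0∞ | ∃ S : Finset V,
              0 < (∑ s ∈ S, ∑' y, c s y) ∧ (∑ s ∈ S, ∑' y, c s y) ≤ u ∧
              t = ENNReal.ofReal ((∑ s ∈ S, ∑' a, if a ∈ S then 0 else c s a) /
                    (∑ s ∈ S, ∑' y, c s y))}) →
        ∀ u v : V, u ≠ v →
          Summable (fun n => kernelIter (fun x y => c x y / ∑' z, c x z) n u v) ∧
          (∑' n, kernelIter (fun x y => c x y / ∑' z, c x z) n u v) / (∑' y, c v y)
            ≤ C * (G.dist u v : ℝ) ^ (-((d - 2) / 2)) := by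
  have hd0 : 0 < d := by linarith
  have hρ := ReversibleNetwork.heatRate_pos hd0 hc₀
  have hd1 : 0 < d / 2 - 1 := by linarith
  refine ⟨(ReversibleNetwork.heatRate d c₀ / 2) ^ (-(d / 2)) / (d / 2 - 1), by positivity, ?_⟩
  intro V _ _ G c hc hsymm _ hsum hpos hadj hG hΦ u v huv
  set w : V → V → ℝ≥0∞ := fun x y => ENNReal.ofReal (c x y) with hw
  have hm : ∀ x, ReversibleNetwork.mass w x = ENNReal.ofReal (∑' y, c x y) := fun x =>
    (ENNReal.ofReal_tsum_of_nonneg (hc x) (hsum x)).symm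
  have hmpos : ∀ x, ReversibleNetwork.mass w x ≠ 0 := fun x => by
    rw [hm]
    simpa using hpos x
  have hmtop : ∀ x, ReversibleNetwork.mass w x ≠ ∞ := fun x => by
    rw [hm]
    exact ENNReal.ofReal_ne_top
  have hwsymm : ∀ x y, w x y = w y x := fun x y => by rw [hw]; simp only [hsymm x y]
  have hmS : ∀ S : Finset V, ∑ x ∈ S, ReversibleNetwork.mass w x =
      ENNReal.ofReal (∑ s ∈ S, ∑' y, c s y) := fun S => by
    rw [ENNReal.ofReal_sum_of_nonneg fun x _ => (hpos x).le]
    exact Finset.sum_congr rfl fun x _ => hm x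
  have hiso : ∀ u : ℝ, 0 < u → ∀ S : Finset V,
      ∑ x ∈ S, ReversibleNetwork.mass w x ≤ ENNReal.ofReal u →
      ENNReal.ofReal (c₀ * u ^ (-(1 / d))) * ∑ x ∈ S, ReversibleNetwork.mass w x ≤
        ∑ x ∈ S, ∑' y, if y ∈ S then 0 else w x y := by
    intro u hu S hS
    rcases S.eq_empty_or_nonempty with rfl | hne
    · simp
    have hSpos : 0 < ∑ s ∈ S, ∑' y, c s y := Finset.sum_pos (fun x _ => hpos x) hne
    rw [hmS, ENNReal.ofReal_le_ofReal_iff hu.le] at hS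
    have h1 := (hΦ u hu).trans (sInf_le ⟨S, hSpos, hS, rfl⟩)
    rw [ENNReal.ofReal_div_of_pos hSpos, ENNReal.le_div_iff_mul_le
      (Or.inl (by simpa using hSpos)) (Or.inl ENNReal.ofReal_ne_top)] at h1
    have hnn : ∀ x y, 0 ≤ (if y ∈ S then 0 else c x y) := fun x y => by
      split_ifs
      exacts [le_rfl, hc x y]
    rw [hmS]
    refine h1.trans ?_
    rw [ENNReal.ofReal_sum_of_nonneg fun x _ => tsum_nonneg (hnn x)]
    refine Finset.sum_le_sum fun x _ => (ReversibleNetwork.ofReal_tsum_le (hnn x)).trans ?_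
    refine ENNReal.tsum_le_tsum fun y => ?_
    split_ifs <;> simp [hw]
  have hD : 1 ≤ G.dist u v := hG.pos_dist_of_ne huv
  have hgreen := ReversibleNetwork.tsum_lazyHeat_le w hwsymm hmpos hmtop hd hc₀ hiso u v hD
    fun n hn => ReversibleNetwork.lazyHeat_eq_zero_of_lt_dist w G hG
      (fun x y hxy => (hadj x y).2 (by simpa [hw] using hxy)) v n u hn
  set K := (ReversibleNetwork.heatRate d c₀ / 2) ^ (-(d / 2)) / (d / 2 - 1) with hK
  have hK0 : 0 < K := by positivity
  have hnn : ∀ n, 0 ≤ kernelIter (fun x y => c x y / ∑' z, c x z) n u v := fun n =>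
    ReversibleNetwork.kernelIter_nonneg (fun x y => div_nonneg (hc x y) (hpos x).le) n u v
  have hpartial : ∀ N, ∑ n ∈ Finset.range N, kernelIter (fun x y => c x y / ∑' z, c x z) n u v ≤
      (∑' y, c v y) * (K * (G.dist u v : ℝ) ^ (-((d - 2) / 2))) := by
    intro N
    have hπ := hpos v
    rw [← ENNReal.ofReal_le_ofReal_iff (by positivity),
      ENNReal.ofReal_sum_of_nonneg fun n _ => hnn n, ENNReal.ofReal_mul hπ.le]
    calc ∑ n ∈ Finset.range N,
          ENNReal.ofReal (kernelIter (fun x y => c x y / ∑' z, c x z) n u v)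
        ≤ ∑ n ∈ Finset.range N,
            ReversibleNetwork.mass w v * ReversibleNetwork.heat w v n u :=
          Finset.sum_le_sum fun n _ =>
            ReversibleNetwork.ofReal_kernelIter_le c hc hsum hpos n u v
      _ = ENNReal.ofReal (∑' y, c v y) *
            ∑ n ∈ Finset.range N, ReversibleNetwork.heat w v n u := by
          rw [Finset.mul_sum, hm]
      _ ≤ _ := by
          refine mul_le_mul_right ?_ _
          refine (ReversibleNetwork.sum_range_heat_le w hmpos hmtop v (fun x =>
            ReversibleNetwork.tsum_lazyHeat_ne_top w hwsymm hmpos hmtop hd hc₀ hiso x v)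
            N u).trans ?_
          rw [show -((d - 2) / 2) = 1 - d / 2 by ring]
          exact (mul_le_of_le_one_left' (by simp)).trans hgreen
  refine ⟨summable_of_sum_range_le hnn hpartial, ?_⟩
  rw [div_le_iff₀ (hpos v), mul_comm]
  exact Real.tsum_le_of_sum_range_le hnn hpartial
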